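/- Lower bound on the minimum time-space product: liminf_{n→∞} log₂( TS(n) / n ) / ( 2·√(log₂ n) ) ≥ 1. (Combined with the matching upper bound this gives TS(n) = 2^{2√(log₂ n)·(1+o(1))}·n as n → ∞.) -/

import Mathlib

/-!
The lower bound rests on the inequality `T ≥ 2 ^ k * (n + 1 - (S + 1) ^ k)`, valid for every `k` and
every solution with `T` moves and space at most `S` (`solution_lower`). It is proved by induction
on `k` for an arbitrary window of squares that starts empty and ends with its top square pebbled
(`window_bound`). The pebbles left in the window at the end cut it into at most `S` gaps, all of
them empty. Just before the pebble on top of a gap was placed, the highest square of that gap was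
pebbled; hence up to that time the gap is an instance of the same problem, and from that time on it
is the time reversal of another one. The bound for `k` thus applies twice in every gap, while the
additive loss is multiplied by at most `S + 1`.

Taking `k` maximal with `(S + 1) ^ k ≤ n / 2` gives, with `L = log₂ (S + 1)`,
`log₂ (S * T / n) ≥ L + (log₂ n - 1) / L - 3 ≥ 2 √(log₂ n) - 5` by the arithmetic-geometric mean
inequality (`TS_log_lower`).

A real `liminf` is meaningful only if the sequence does not tend to infinity, so an upper bound
along a subsequence is needed as well. Splitting the board recursively, `k` times, into `2 ^ k`
blocks solves the game on `2 ^ (k ^ 2)` squares with time-space product at most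
`2 ^ (k ^ 2 + 3 * k)` (`canPebble_pow`, `TS_log_upper`).
-/

/-- A solution of Bennett's pebble game on `n` squares: a sequence of
configurations `c 0, …, c T` (subsets of `{1, …, n}`), starting empty,
ending with exactly one pebble on square `n`, where consecutive
configurations differ in exactly one square `i`, and a pebble may be added
to or removed from square `i` only if `i = 1` or square `i - 1` is pebbled. -/
structure PebbleSolution (n : ℕ) where
  T : ℕ
  c : ℕ → Finset ℕ
  subset : ∀ j ≤ T, c j ⊆ Finset.Icc 1 n
  init : c 0 = ∅
  final : c T = {n}
  move : ∀ j, 1 ≤ j → j ≤ T → ∃ i,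
    symmDiff (c (j - 1)) (c j) = {i} ∧ (i = 1 ∨ i - 1 ∈ c (j - 1))

/-- The space used by a solution: the maximum number of pebbles on the board. -/
def PebbleSolution.space {n : ℕ} (s : PebbleSolution n) : ℕ :=
  (Finset.range (s.T + 1)).sup fun j => (s.c j).card

/-- `F n S` is the minimum number of moves of a solution of the pebble game on
`n` squares using at most `S` pebbles, or `⊤` if no such solution exists. -/
noncomputable def F (n S : ℕ) : ℕ∞ :=
  sInf {t : ℕ∞ | ∃ s : PebbleSolution n, s.space ≤ S ∧ t = (s.T : ℕ∞)}

/-- `Δ n S = F (n+1) S - F n S` for `n ≥ 1` when `F (n+1) S` is finite;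
`Δ n S = 0` for `n ≤ 0`; `Δ n S = ⊤` otherwise. -/
noncomputable def Δ (n : ℤ) (S : ℕ) : ℕ∞ :=
  if n ≤ 0 then 0
  else if F (n.toNat + 1) S < ⊤ then F (n.toNat + 1) S - F n.toNat S
  else ⊤

/-- For `n ≥ 2` (and `S ≥ 2`), `mOpt n S` is the least `m` with `1 ≤ m ≤ n - 1`
minimizing `F m S + F m (S-1) + F (n-m) (S-1)`; `mOpt 0 S = mOpt 1 S = 0`. -/
noncomputable def mOpt (n S : ℕ) : ℕ :=
  if n ≤ 1 then 0
  else sInf {m : ℕ | 1 ≤ m ∧ m ≤ n - 1 ∧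
    ∀ m', 1 ≤ m' → m' ≤ n - 1 →
      F m S + F m (S - 1) + F (n - m) (S - 1) ≤
        F m' S + F m' (S - 1) + F (n - m') (S - 1)}

/-- `xk k S = min { n ≥ 1 : Δ n S > 2 ^ k }`. -/
noncomputable def xk (k S : ℕ) : ℕ :=
  sInf {n : ℕ | 1 ≤ n ∧ (2 : ℕ∞) ^ k < Δ (n : ℤ) S}

/-- The minimum time-space product `TS n = min_{S ≥ 1} S * F n S`. -/
noncomputable def TS (n : ℕ) : ℕ :=
  sInf {t : ℕ | ∃ S : ℕ, 1 ≤ S ∧ (t : ℕ∞) = (S : ℕ∞) * F n S}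

/-- The binary entropy function. -/
noncomputable def H (γ : ℝ) : ℝ :=
  -γ * Real.logb 2 γ - (1 - γ) * Real.logb 2 (1 - γ)

/-! ### Lower bound on the number of moves -/

/-- Number of the first `T` steps of `c` that change square `i`. -/
def moveCount (c : ℕ → Finset ℕ) (T i : ℕ) : ℕ :=
  ∑ j ∈ Finset.range T, if i ∈ symmDiff (c j) (c (j + 1)) then 1 else 0

/-- A time-reversible form of the rules for the first `T` steps: when square `i ≥ 2` changes,
square `i - 1` is pebbled both before and after. Several squares, or none, may change at once. -/
def Legal (c : ℕ → Finset ℕ) (T : ℕ) : Prop :=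
  ∀ j < T, ∀ i ∈ symmDiff (c j) (c (j + 1)), 1 ≤ i ∧
    (i = 1 ∨ (i - 1 ∈ c j ∧ i - 1 ∈ c (j + 1)))

lemma moveCount_split (c : ℕ → Finset ℕ) {t T : ℕ} (h : t ≤ T) (i : ℕ) :
    moveCount c T i = moveCount c t i + moveCount (fun j => c (T - j)) (T - t) i := by
  obtain ⟨d, rfl⟩ := Nat.exists_eq_add_of_le h
  unfold moveCount
  rw [Finset.sum_range_add, Nat.add_sub_cancel_left]
  congr 1
  rw [← Finset.sum_range_reflect]
  refine Finset.sum_congr rfl fun j hj => ?_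
  have hj := Finset.mem_range.1 hj
  rw [symmDiff_comm, show t + (d - 1 - j) = t + d - (j + 1) by omega,
    show t + d - (j + 1) + 1 = t + d - j by omega]

lemma Legal.rev {c : ℕ → Finset ℕ} {T : ℕ} (h : Legal c T) :
    Legal (fun j => c (T - j)) T := by
  intro j hj i hi
  have e : T - (j + 1) + 1 = T - j := by omega
  have := h (T - (j + 1)) (by omega) i (by rw [e, symmDiff_comm]; exact hi)
  rw [e] at this
  exact ⟨this.1, this.2.imp_right And.symm⟩

/-- The step that pebbles a square `q ≥ 2` starts from a configuration containing `q - 1`. -/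
lemma exists_pred_mem {c : ℕ → Finset ℕ} {q : ℕ} (T : ℕ) (h : Legal c T) (hq : 2 ≤ q)
    (h0 : q ∉ c 0) (hT : q ∈ c T) :
    ∃ t < T, q - 1 ∈ c t ∧ q ∈ symmDiff (c t) (c (t + 1)) := by
  induction T with
  | zero => exact absurd hT h0
  | succ T ih =>
    by_cases hm : q ∈ c T
    · obtain ⟨t, ht, h1⟩ := ih (fun j hj => h j (by omega)) hm
      exact ⟨t, by omega, h1⟩
    · have hs : q ∈ symmDiff (c T) (c (T + 1)) := by
        rw [Finset.mem_symmDiff]; exact Or.inr ⟨hT, hm⟩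
      have := h T (by omega) q hs
      exact ⟨T, by omega, by rcases this.2 with h | h; omega; exact h.1, hs⟩

/-- Every square of a window whose top gets pebbled, starting from an empty window, is changed. -/
lemma window_base {c : ℕ → Finset ℕ} (p d : ℕ) : ∀ T, Legal c T →
    (∀ i ∈ Finset.Ioc p (p + d), i ∉ c 0) → (0 < d → p + d ∈ c T) →
    d ≤ ∑ i ∈ Finset.Ioc p (p + d), moveCount c T i := by
  induction d with
  | zero => intros; omega
  | succ d ih =>
    intro T hL h0 hT
    have hqT := hT (by omega)
    have hq0 : p + (d + 1) ∉ c 0 := h0 _ (by simp)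
    have hex : ∃ t < T, (0 < d → p + d ∈ c t) ∧
        p + (d + 1) ∈ symmDiff (c t) (c (t + 1)) := by
      rcases Nat.eq_zero_or_pos d with hd | hd
      · subst hd
        by_contra hcon
        push Not at hcon
        have : ∀ t ≤ T, p + 1 ∉ c t := by
          intro t
          induction t with
          | zero => intro _; exact hq0
          | succ t iht =>
            intro ht hm
            exact hcon t (by omega) (by omega)
              (by rw [Finset.mem_symmDiff]; exact Or.inr ⟨hm, iht (by omega)⟩)
        exact this T le_rfl hqT
      · obtain ⟨t, ht, h1, h2⟩ := exists_pred_mem T hL (by omega) hq0 hqT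
        exact ⟨t, ht, fun _ => h1, h2⟩
    obtain ⟨t, ht, h1, h2⟩ := hex
    have hsum : ∑ i ∈ Finset.Ioc p (p + (d + 1)), moveCount c T i =
        ∑ i ∈ Finset.Ioc p (p + d), moveCount c T i + moveCount c T (p + (d + 1)) := by
      rw [← Finset.sum_Ioc_consecutive _ (show p ≤ p + d by omega)
        (show p + d ≤ p + (d + 1) by omega)]
      congr 1
      rw [show p + (d + 1) = p + d + 1 by ring, Nat.Ioc_succ_singleton, Finset.sum_singleton]
    rw [hsum]
    have hA := ih t (fun j hj => hL j (by omega))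
      (fun i hi => h0 i (by simp only [Finset.mem_Ioc] at hi ⊢; omega)) h1
    have hB : ∑ i ∈ Finset.Ioc p (p + d), moveCount c t i ≤
        ∑ i ∈ Finset.Ioc p (p + d), moveCount c T i :=
      Finset.sum_le_sum fun i _ => by rw [moveCount_split c ht.le]; omega
    have hC : 1 ≤ moveCount c T (p + (d + 1)) := by
      unfold moveCount
      refine le_trans (by simp [h2]) (Finset.single_le_sum
        (f := fun j => if p + (d + 1) ∈ symmDiff (c j) (c (j + 1)) then 1 else 0)
        (fun _ _ => Nat.zero_le _) (Finset.mem_range.2 ht))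
    omega

/-- Pebbling the top of an initially empty window of length `q - p`, with at most `S` pebbles on
the board, takes at least `2 ^ k * (q - p + 1 - (S + 1) ^ k)` moves inside the window. The final
pebbles cut the window into at most `S` gaps, and each gap has been both filled up to its top and
cleared again, so the bound for `k` applies twice to every gap. -/
lemma window_bound (S k : ℕ) : ∀ (c : ℕ → Finset ℕ) (T p q : ℕ), p ≤ q → Legal c T →
    (∀ j ≤ T, (c j).card ≤ S) → (∀ i ∈ Finset.Ioc p q, i ∉ c 0) → (p < q → q ∈ c T) →
    2 ^ k * (q - p + 1) ≤ ∑ i ∈ Finset.Ioc p q, moveCount c T i + 2 ^ k * (S + 1) ^ k := by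
  induction k with
  | zero =>
    intro c T p q hpq hL _ h0 hT
    obtain ⟨d, rfl⟩ := Nat.exists_eq_add_of_le hpq
    have := window_base p d T hL h0 (fun h => hT (by omega))
    simp only [pow_zero, one_mul]
    omega
  | succ k ih =>
    intro c T p q hpq hL hS h0 hT
    -- One summand per final pebble `q`, which accounts for `q` and the gap below it.
    have key : ∀ q, p ≤ q → (∀ i ∈ Finset.Ioc p q, i ∉ c 0) → (p < q → q ∈ c T) →
        2 ^ (k + 1) * (q - p) ≤ ∑ i ∈ Finset.Ioc p q, moveCount c T i +
          2 ^ (k + 1) * ((c T ∩ Finset.Ioc p q).card * (S + 1) ^ k) := by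
      intro q
      induction q using Nat.strong_induction_on with
      | _ q ihq =>
      intro hpq h0 hT
      rcases hpq.eq_or_lt with rfl | hlt
      · simp
      have hqT := hT hlt
      obtain ⟨r, hpr, hrq, hrT, hgap⟩ : ∃ r, p ≤ r ∧ r < q ∧ (p < r → r ∈ c T) ∧
          ∀ i ∈ Finset.Ioc r (q - 1), i ∉ c T := by
        rcases (c T ∩ Finset.Ioc p (q - 1)).eq_empty_or_nonempty with he | hne
        · refine ⟨p, le_rfl, hlt, fun h => absurd h (lt_irrefl _), fun i hi hm => ?_⟩
          have : i ∈ c T ∩ Finset.Ioc p (q - 1) := Finset.mem_inter.2 ⟨hm, hi⟩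
          simp [he] at this
        · obtain ⟨r, hmem, hle⟩ := Finset.exists_max_image _ id hne
          simp only [Finset.mem_inter, Finset.mem_Ioc, id] at hmem hle ⊢
          refine ⟨r, by omega, by omega, fun _ => hmem.1, fun i hi hm => ?_⟩
          have := hle i ⟨hm, by omega, by omega⟩
          omega
      have hI := ihq r hrq hpr
        (fun i hi => h0 i (by simp only [Finset.mem_Ioc] at hi ⊢; omega)) hrT
      have hgapmoves : 2 ^ (k + 1) * (q - r) ≤
          ∑ i ∈ Finset.Ioc r (q - 1), moveCount c T i + 2 ^ (k + 1) * (S + 1) ^ k := by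
        obtain ⟨t, ht, h1⟩ : ∃ t ≤ T, (r < q - 1 → q - 1 ∈ c t) := by
          by_cases hr : r < q - 1
          · obtain ⟨t, ht, h1, -⟩ := exists_pred_mem T hL (by omega)
              (h0 q (by simp only [Finset.mem_Ioc]; omega)) hqT
            exact ⟨t, ht.le, fun _ => h1⟩
          · exact ⟨0, by omega, fun h => absurd h hr⟩
        have hA := ih c t r (q - 1) (by omega) (fun j hj => hL j (by omega))
          (fun j hj => hS j (by omega))
          (fun i hi => h0 i (by simp only [Finset.mem_Ioc] at hi ⊢; omega)) h1
        have hB := ih (fun j => c (T - j)) (T - t) r (q - 1) (by omega)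
          (fun j hj => hL.rev j (by omega)) (fun j hj => hS _ (by omega))
          (by simpa using hgap) (by simpa [Nat.sub_sub_self ht] using h1)
        have hsum : ∑ i ∈ Finset.Ioc r (q - 1), moveCount c T i =
            ∑ i ∈ Finset.Ioc r (q - 1), moveCount c t i +
            ∑ i ∈ Finset.Ioc r (q - 1), moveCount (fun j => c (T - j)) (T - t) i := by
          rw [← Finset.sum_add_distrib]
          exact Finset.sum_congr rfl fun i _ => moveCount_split c ht i
        rw [show q - 1 - r + 1 = q - r by omega] at hA hB
        rw [hsum, pow_succ]
        linarith
      have hsub : (c T ∩ Finset.Ioc p r).card + 1 ≤ (c T ∩ Finset.Ioc p q).card := by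
        rw [← Finset.card_insert_of_notMem (a := q) (by simp; omega)]
        refine Finset.card_le_card fun i hi => ?_
        simp only [Finset.mem_insert, Finset.mem_inter, Finset.mem_Ioc] at hi ⊢
        rcases hi with rfl | hi
        · exact ⟨hqT, hlt, le_rfl⟩
        · exact ⟨hi.1, by omega, by omega⟩
      have hsplit : ∑ i ∈ Finset.Ioc p r, moveCount c T i +
          ∑ i ∈ Finset.Ioc r (q - 1), moveCount c T i ≤
          ∑ i ∈ Finset.Ioc p q, moveCount c T i := by
        rw [Finset.sum_Ioc_consecutive _ hpr (by omega)]
        exact Finset.sum_le_sum_of_subset (Finset.Ioc_subset_Ioc_right (by omega))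
      have hmul : 2 ^ (k + 1) * (((c T ∩ Finset.Ioc p r).card + 1) * (S + 1) ^ k) ≤
          2 ^ (k + 1) * ((c T ∩ Finset.Ioc p q).card * (S + 1) ^ k) := by gcongr
      have e : q - p = (r - p) + (q - r) := by omega
      rw [e]
      linarith
    have h1 := key q hpq h0 hT
    have hcard : (c T ∩ Finset.Ioc p q).card ≤ S :=
      (Finset.card_le_card Finset.inter_subset_left).trans (hS T le_rfl)
    have h2 : 2 ^ (k + 1) * ((c T ∩ Finset.Ioc p q).card * (S + 1) ^ k + 1) ≤
        2 ^ (k + 1) * (S + 1) ^ (k + 1) := by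
      gcongr
      have h3 : (c T ∩ Finset.Ioc p q).card * (S + 1) ^ k ≤ S * (S + 1) ^ k := by gcongr
      have h4 : 1 ≤ (S + 1) ^ k := Nat.one_le_pow _ _ (by omega)
      rw [pow_succ]
      linarith
    linarith

lemma solution_lower {n S : ℕ} (s : PebbleSolution n) (hS : s.space ≤ S) (k : ℕ) :
    2 ^ k * (n + 1) ≤ s.T + 2 ^ k * (S + 1) ^ k := by
  have hL : Legal s.c s.T := by
    intro j hj i hi
    obtain ⟨i', h1, h2⟩ := s.move (j + 1) (by omega) (by omega)
    rw [Nat.add_sub_cancel] at h1 h2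
    have hmem := hi
    rw [h1, Finset.mem_singleton] at hmem
    subst hmem
    have hpos : 1 ≤ i := by
      rw [Finset.mem_symmDiff] at hi
      rcases hi with hi | hi
      · exact (Finset.mem_Icc.1 (s.subset j (by omega) hi.1)).1
      · exact (Finset.mem_Icc.1 (s.subset (j + 1) (by omega) hi.1)).1
    refine ⟨hpos, h2.imp_right fun h => ⟨h, ?_⟩⟩
    by_contra hn
    have : i - 1 ∈ symmDiff (s.c j) (s.c (j + 1)) := by
      rw [Finset.mem_symmDiff]; exact Or.inl ⟨h, hn⟩
    rw [h1, Finset.mem_singleton] at this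
    omega
  have hb := window_bound S k s.c s.T 0 n (Nat.zero_le _) hL
    (fun j hj => le_trans (Finset.le_sup (f := fun j => (s.c j).card)
      (Finset.mem_range.2 (by omega))) hS)
    (by simp [s.init]) (by simp [s.final])
  have hT : ∑ i ∈ Finset.Ioc 0 n, moveCount s.c s.T i ≤ s.T := by
    unfold moveCount
    rw [Finset.sum_comm]
    calc _ ≤ ∑ j ∈ Finset.range s.T, 1 := by
          refine Finset.sum_le_sum fun j hj => ?_
          obtain ⟨i', h1, -⟩ := s.move (j + 1) (by omega)
            (by have := Finset.mem_range.1 hj; omega)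
          rw [Nat.add_sub_cancel] at h1
          rw [h1]
          simp only [Finset.mem_singleton, Finset.sum_ite_eq']
          split_ifs <;> omega
      _ = s.T := by simp
  simp only [Nat.sub_zero] at hb
  omega

/-! ### Recursive pebbling strategies -/

/-- A sequence of exactly `t` legal moves from `A` to `B` through configurations satisfying `K`. -/
inductive Walk (K : Finset ℕ → Prop) (A : Finset ℕ) : ℕ → Finset ℕ → Prop
  | nil : K A → Walk K A 0 A
  | snoc {t : ℕ} {B C : Finset ℕ} {i : ℕ} : Walk K A t B → symmDiff B C = {i} →
      (i = 1 ∨ (i ≠ 0 ∧ i - 1 ∈ B)) → K C → Walk K A (t + 1) C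

lemma Walk.left {K : Finset ℕ → Prop} {A B : Finset ℕ} {t : ℕ} (w : Walk K A t B) : K A := by
  induction w with
  | nil h => exact h
  | snoc _ _ _ _ ih => exact ih

lemma Walk.mono {K K' : Finset ℕ → Prop} (h : ∀ C, K C → K' C) {A B : Finset ℕ} {t : ℕ}
    (w : Walk K A t B) : Walk K' A t B := by
  induction w with
  | nil h1 => exact .nil (h _ h1)
  | snoc _ h1 h2 h3 ih => exact .snoc ih h1 h2 (h _ h3)

lemma Walk.trans {K : Finset ℕ → Prop} {A B C : Finset ℕ} {t u : ℕ}
    (w : Walk K A t B) (v : Walk K B u C) : Walk K A (t + u) C := by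
  induction v with
  | nil h1 => exact w
  | snoc _ h1 h2 h3 ih => exact .snoc ih h1 h2 h3

lemma Walk.symm {K : Finset ℕ → Prop} {A B : Finset ℕ} {t : ℕ}
    (w : Walk K A t B) : Walk K B t A := by
  induction w with
  | nil h => exact .nil h
  | @snoc t B C i w h1 h2 h3 ih =>
    have hstep : Walk K C 1 B := by
      refine .snoc (i := i) (.nil h3) (by rw [symmDiff_comm, h1]) (h2.imp_right ?_) ih.left
      rintro ⟨h0, hm⟩
      refine ⟨h0, ?_⟩
      by_contra hn
      have : i - 1 ∈ symmDiff B C := by rw [Finset.mem_symmDiff]; exact Or.inl ⟨hm, hn⟩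
      rw [h1, Finset.mem_singleton] at this
      omega
    rw [add_comm]
    exact hstep.trans ih

lemma Walk.toSeq {K : Finset ℕ → Prop} {A B : Finset ℕ} {t : ℕ} (w : Walk K A t B) :
    ∃ c : ℕ → Finset ℕ, c 0 = A ∧ c t = B ∧ (∀ j ≤ t, K (c j)) ∧
      ∀ j, 1 ≤ j → j ≤ t → ∃ i, symmDiff (c (j - 1)) (c j) = {i} ∧
        (i = 1 ∨ i - 1 ∈ c (j - 1)) := by
  induction w with
  | nil h => exact ⟨fun _ => A, rfl, rfl, fun _ _ => h, fun j h1 h2 => by omega⟩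
  | @snoc t B C i w h1 h2 h3 ih =>
    obtain ⟨c, c0, ct, cK, cm⟩ := ih
    refine ⟨fun j => if j ≤ t then c j else C, by simp [c0], by simp, ?_, ?_⟩
    · intro j _
      dsimp only
      split_ifs with hj
      · exact cK j hj
      · exact h3
    · intro j hj1 hj2
      rcases Nat.lt_or_ge t j with h | h
      · obtain rfl : j = t + 1 := by omega
        exact ⟨i, by simpa [ct] using h1, by simpa [ct] using h2.imp_right And.right⟩
      · have h' : j - 1 ≤ t := by omega
        simpa [h, h'] using cm j hj1 h

/-- With `σ` spare pebbles and in `τ` moves, the square `m` places above any pebbled square `p`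
(or above the edge `p = 0`) can be pebbled when the `m` squares above `p` are empty, leaving all
other squares as they were. -/
def CanPebble (m σ τ : ℕ) : Prop :=
  ∀ (p : ℕ) (A : Finset ℕ), (p = 0 ∨ p ∈ A) → (∀ i ∈ Finset.Ioc p (p + m), i ∉ A) →
    Walk (fun C => C ⊆ A ∪ Finset.Ioc p (p + m) ∧ C.card ≤ A.card + σ) A τ (insert (p + m) A)

lemma canPebble_one : CanPebble 1 1 1 := by
  intro p A hp hA
  have hn : p + 1 ∉ A := hA _ (by simp)
  refine .snoc (i := p + 1) (t := 0) (.nil ⟨Finset.subset_union_left, by omega⟩) ?_ ?_ ⟨?_, ?_⟩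
  · ext i
    simp only [Finset.mem_symmDiff, Finset.mem_insert, Finset.mem_singleton]
    grind
  · rcases hp with rfl | hp
    · exact Or.inl rfl
    · exact Or.inr ⟨by omega, by simpa using hp⟩
  · intro i hi
    simp only [Finset.mem_insert, Finset.mem_union, Finset.mem_Ioc] at hi ⊢
    grind
  · exact Finset.card_insert_le _ _

lemma CanPebble.comp {m σ τ m' σ' τ' : ℕ} (h : CanPebble m σ τ) (h' : CanPebble m' σ' τ')
    (hm : 0 < m) (hm' : 0 < m') (hσ : σ ≤ σ') : CanPebble (m + m') (σ' + 1) (2 * τ + τ') := by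
  intro p A hp hA
  have hA' : ∀ i, p < i → i ≤ p + (m + m') → i ∉ A := fun i h1 h2 =>
    hA i (Finset.mem_Ioc.2 ⟨h1, h2⟩)
  have w1 := h p A hp (fun i hi => by
    rw [Finset.mem_Ioc] at hi; exact hA' i hi.1 (by omega))
  have w2 := h' (p + m) (insert (p + m) A) (Or.inr (Finset.mem_insert_self _ _)) (fun i hi => by
    rw [Finset.mem_Ioc] at hi
    rw [Finset.mem_insert, not_or]
    exact ⟨by omega, hA' i (by omega) (by omega)⟩)
  have w3 := h p (insert (p + (m + m')) A) (hp.imp_right Finset.mem_insert_of_mem) (fun i hi => by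
    rw [Finset.mem_Ioc] at hi
    rw [Finset.mem_insert, not_or]
    exact ⟨by omega, hA' i (by omega) (by omega)⟩)
  have e : insert (p + m + m') (insert (p + m) A) =
      insert (p + m) (insert (p + (m + m')) A) := by
    rw [Finset.insert_comm, add_assoc]
  rw [e] at w2
  rw [show 2 * τ + τ' = τ + τ' + τ by ring]
  refine ((w1.mono ?_).trans (w2.mono ?_)).trans (w3.symm.mono ?_)
  · rintro C ⟨h1, h2⟩
    refine ⟨h1.trans fun i hi => ?_, by omega⟩
    simp only [Finset.mem_union, Finset.mem_Ioc] at hi ⊢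
    rcases hi with hi | hi
    · exact Or.inl hi
    · exact Or.inr (by omega)
  · rintro C ⟨h1, h2⟩
    refine ⟨h1.trans fun i hi => ?_, ?_⟩
    · simp only [Finset.mem_union, Finset.mem_insert, Finset.mem_Ioc] at hi ⊢
      rcases hi with (rfl | hi) | hi
      · exact Or.inr (by omega)
      · exact Or.inl hi
      · exact Or.inr (by omega)
    · have := Finset.card_insert_le (p + m) A
      omega
  · rintro C ⟨h1, h2⟩
    refine ⟨h1.trans fun i hi => ?_, ?_⟩
    · simp only [Finset.mem_union, Finset.mem_insert, Finset.mem_Ioc] at hi ⊢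
      rcases hi with (rfl | hi) | hi
      · exact Or.inr (by omega)
      · exact Or.inl hi
      · exact Or.inr (by omega)
    · have := Finset.card_insert_le (p + (m + m')) A
      omega

lemma CanPebble.repeat {m σ τ : ℕ} (h : CanPebble m σ τ) (hm : 0 < m) (b : ℕ) :
    CanPebble ((b + 1) * m) (σ + b) ((2 * b + 1) * τ) := by
  induction b with
  | zero => simpa using h
  | succ b ih =>
    have := h.comp ih hm (by positivity) (by omega)
    convert this using 1 <;> ring

lemma canPebble_pow (b k : ℕ) :
    CanPebble ((b + 1) ^ k) (1 + k * b) ((2 * b + 1) ^ k) := by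
  induction k with
  | zero => simpa using canPebble_one
  | succ k ih =>
    have := ih.repeat (by positivity) b
    convert this using 1 <;> ring

lemma CanPebble.F_le {n σ τ : ℕ} (h : CanPebble n σ τ) : F n σ ≤ τ := by
  obtain ⟨c, c0, ct, cK, cm⟩ := (h 0 ∅ (Or.inl rfl) (by simp)).toSeq
  simp only [zero_add, Finset.empty_union, Finset.card_empty] at ct cK
  refine sInf_le ⟨⟨τ, c, fun j hj => (cK j hj).1.trans ?_, c0, by simpa using ct, cm⟩, ?_, rfl⟩
  · intro i hi
    simp only [Finset.mem_Ioc, Finset.mem_Icc] at hi ⊢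
    omega
  · refine Finset.sup_le fun j hj => (cK j ?_).2
    exact Nat.lt_succ_iff.1 (Finset.mem_range.1 hj)

/-! ### The time-space product -/

lemma TS_le {n σ τ : ℕ} (h : CanPebble n σ τ) (hσ : 1 ≤ σ) : TS n ≤ σ * τ := by
  have hF := h.F_le
  obtain ⟨f, hf⟩ := ENat.ne_top_iff_exists.1 (ne_top_of_le_ne_top (ENat.natCast_ne_top τ) hF)
  rw [← hf] at hF
  have hle : f ≤ τ := by exact_mod_cast hF
  refine le_trans (Nat.sInf_le ⟨σ, hσ, ?_⟩) (Nat.mul_le_mul_left σ hle)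
  rw [← hf]
  push_cast
  rfl

lemma exists_TS_eq {n : ℕ} (hn : 0 < n) :
    ∃ (S : ℕ) (s : PebbleSolution n), 1 ≤ S ∧ s.space ≤ S ∧ TS n = S * s.T := by
  have hne : {t : ℕ | ∃ S : ℕ, 1 ≤ S ∧ (t : ℕ∞) = (S : ℕ∞) * F n S}.Nonempty := by
    obtain ⟨b, rfl⟩ : ∃ b, n = b + 1 := ⟨n - 1, by omega⟩
    have h := canPebble_pow b 1
    rw [pow_one] at h
    obtain ⟨f, hf⟩ := ENat.ne_top_iff_exists.1
      (ne_top_of_le_ne_top (ENat.natCast_ne_top _) (h.F_le))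
    exact ⟨(1 + 1 * b) * f, 1 + 1 * b, by omega, by rw [← hf]; push_cast; rfl⟩
  obtain ⟨S, hS, hTS⟩ := Nat.sInf_mem hne
  have hFne : F n S ≠ ⊤ := by
    intro htop
    rw [htop, ENat.mul_top (by exact_mod_cast (by omega : S ≠ 0))] at hTS
    exact ENat.natCast_ne_top _ hTS
  have hset : {t : ℕ∞ | ∃ s : PebbleSolution n, s.space ≤ S ∧ t = (s.T : ℕ∞)}.Nonempty := by
    by_contra hcon
    rw [Set.not_nonempty_iff_eq_empty] at hcon
    exact hFne (by rw [F, hcon, sInf_empty])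
  obtain ⟨s, hs, hF⟩ := csInf_mem hset
  refine ⟨S, s, hS, hs, ?_⟩
  have hF' : F n S = s.T := hF
  rw [hF'] at hTS
  have : ((TS n : ℕ) : ℕ∞) = ((S * s.T : ℕ) : ℕ∞) := by push_cast; exact hTS
  exact_mod_cast this

lemma TS_log_lower {n : ℕ} (hn : 2 ≤ n) :
    2 * √(Real.logb 2 n) - 5 ≤ Real.logb 2 ((TS n : ℝ) / n) := by
  obtain ⟨S, s, hS, hs, hTS⟩ := exists_TS_eq (n := n) (by omega)
  have hn0 : (0 : ℝ) < n := by positivity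
  have hS1 : (1 : ℝ) ≤ S := by exact_mod_cast hS
  set N := Real.logb 2 n with hN
  set L := Real.logb 2 ((S : ℝ) + 1) with hLdef
  have hN1 : 1 ≤ N := by
    rw [hN, Real.le_logb_iff_rpow_le one_lt_two hn0, Real.rpow_one]
    exact_mod_cast hn
  have hL1 : 1 ≤ L := by
    rw [hLdef, Real.le_logb_iff_rpow_le one_lt_two (by positivity), Real.rpow_one]
    linarith
  -- The largest `k` with `(S + 1) ^ k ≤ n / 2`.
  set k := ⌊(N - 1) / L⌋₊ with hk
  have hkle : (k : ℝ) * L ≤ N - 1 := by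
    rw [← le_div_iff₀ (by linarith)]
    exact Nat.floor_le (div_nonneg (by linarith) (by linarith))
  have hklt : (N - 1) / L < k + 1 := Nat.lt_floor_add_one _
  have hpow : ((S : ℝ) + 1) ^ k ≤ n / 2 := by
    rw [← Real.logb_le_logb one_lt_two (by positivity) (by positivity), Real.logb_pow,
      Real.logb_div hn0.ne' two_ne_zero, Real.logb_self_eq_one one_lt_two]
    exact hkle
  have hT : (2 : ℝ) ^ k * (n / 2) ≤ s.T := by
    have h1 : (2 : ℝ) ^ k * (n + 1) ≤ s.T + 2 ^ k * (S + 1) ^ k := by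
      exact_mod_cast solution_lower s hs k
    have h2 : (2 : ℝ) ^ k * (S + 1) ^ k ≤ 2 ^ k * (n / 2) := by gcongr
    have h3 : (0 : ℝ) < 2 ^ k := by positivity
    linarith
  have hratio : ((S : ℝ) + 1) * 2 ^ k / 4 ≤ (TS n : ℝ) / n := by
    rw [le_div_iff₀ hn0, hTS]
    push_cast
    calc ((S : ℝ) + 1) * 2 ^ k / 4 * n = ((S : ℝ) + 1) / 2 * (2 ^ k * (n / 2)) := by ring
      _ ≤ S * s.T := by gcongr; linarith
  have hlog : L + k - 2 ≤ Real.logb 2 ((TS n : ℝ) / n) := by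
    refine le_trans (le_of_eq ?_) (Real.logb_le_logb_of_le one_lt_two (by positivity) hratio)
    rw [Real.logb_div (by positivity) (by norm_num), Real.logb_mul (by positivity) (by positivity),
      Real.logb_pow, Real.logb_self_eq_one one_lt_two, show (4 : ℝ) = 2 ^ 2 by norm_num,
      Real.logb_pow, Real.logb_self_eq_one one_lt_two]
    push_cast
    ring
  have hamgm : 2 * √(N - 1) ≤ L + (N - 1) / L := by
    have hsq := Real.sq_sqrt (show 0 ≤ N - 1 by linarith)
    have h1 : L + (N - 1) / L - 2 * √(N - 1) = (L - √(N - 1)) ^ 2 / L := by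
      field_simp
      linear_combination -hsq
    have h2 : 0 ≤ (L - √(N - 1)) ^ 2 / L := by positivity
    linarith
  have hsqrt : √N ≤ √(N - 1) + 1 := by
    rw [Real.sqrt_le_left (by positivity)]
    have hsq := Real.sq_sqrt (show 0 ≤ N - 1 by linarith)
    nlinarith [Real.sqrt_nonneg (N - 1)]
  linarith

/-- The strategy with `k` levels of `2 ^ k` blocks each. -/
lemma TS_log_upper {k : ℕ} (hk : 1 ≤ k) :
    Real.logb 2 ((TS (2 ^ (k ^ 2)) : ℝ) / ((2 ^ (k ^ 2) : ℕ) : ℝ)) ≤ 3 * k := by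
  obtain ⟨b, hb⟩ : ∃ b, 2 ^ k = b + 1 := ⟨2 ^ k - 1, by have := Nat.one_le_two_pow (n := k); omega⟩
  have h := canPebble_pow b k
  rw [← hb, ← pow_mul, ← sq] at h
  have h1 := TS_le h (by omega)
  have h2 : (2 * b + 1) ^ k ≤ 2 ^ k * 2 ^ (k ^ 2) := by
    calc (2 * b + 1) ^ k ≤ (2 * 2 ^ k) ^ k := Nat.pow_le_pow_left (by omega) _
      _ = 2 ^ k * 2 ^ (k ^ 2) := by rw [mul_pow, ← pow_mul, sq]
  have h3 : 1 + k * b ≤ 2 ^ k * 2 ^ k := by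
    have : k < 2 ^ k := Nat.lt_two_pow_self
    calc 1 + k * b ≤ k * (b + 1) := by linarith
      _ ≤ 2 ^ k * 2 ^ k := by rw [hb] at this ⊢; gcongr
  have h4 : TS (2 ^ (k ^ 2)) ≤ 2 ^ (3 * k) * 2 ^ (k ^ 2) := by
    refine h1.trans ((Nat.mul_le_mul h3 h2).trans (le_of_eq ?_))
    ring
  have h6 : (TS (2 ^ (k ^ 2)) : ℝ) / ((2 ^ (k ^ 2) : ℕ) : ℝ) ≤ 2 ^ (3 * k) := by
    rw [div_le_iff₀ (by positivity)]
    exact_mod_cast h4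
  rcases (by positivity : (0 : ℝ) ≤ (TS (2 ^ (k ^ 2)) : ℝ) / ((2 ^ (k ^ 2) : ℕ) : ℝ)).eq_or_lt
    with h0 | h0
  · rw [← h0, Real.logb_zero]
    positivity
  · refine (Real.logb_le_logb_of_le one_lt_two h0 h6).trans (le_of_eq ?_)
    rw [Real.logb_pow, Real.logb_self_eq_one one_lt_two]
    push_cast
    ring

/-- Lower bound on the minimum time-space product:
`TS(n) ≥ 2^{2 √(log₂ n) (1 + o(1))} n`. -/
theorem TS_lower_bound :
    1 ≤ Filter.liminf (fun n : ℕ =>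
        Real.logb 2 ((TS n : ℝ) / (n : ℝ)) / (2 * Real.sqrt (Real.logb 2 n)))
      Filter.atTop := by
  -- In `ℝ` the `liminf` is a junk value unless the sequence is frequently bounded above.
  have hcob : Filter.IsCoboundedUnder (· ≥ ·) Filter.atTop (fun n : ℕ =>
      Real.logb 2 ((TS n : ℝ) / (n : ℝ)) / (2 * Real.sqrt (Real.logb 2 n))) := by
    refine Filter.IsCoboundedUnder.of_frequently_le (a := 3 / 2) ?_
    rw [Filter.frequently_atTop]
    intro a
    refine ⟨2 ^ ((a + 1) ^ 2), ?_, ?_⟩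
    · have : (a + 1) ^ 2 < 2 ^ ((a + 1) ^ 2) := Nat.lt_two_pow_self
      nlinarith
    · have hu := TS_log_upper (k := a + 1) (by omega)
      have hs : √(Real.logb 2 ((2 ^ ((a + 1) ^ 2) : ℕ) : ℝ)) = ((a + 1 : ℕ) : ℝ) := by
        rw [Nat.cast_pow, Nat.cast_ofNat, Real.logb_pow, Real.logb_self_eq_one one_lt_two, mul_one,
          Nat.cast_pow, Real.sqrt_sq (by positivity)]
      rw [hs, div_le_iff₀ (by positivity)]
      linarith
  have hlim : Filter.Tendsto (fun n : ℕ => √(Real.logb 2 (n : ℝ))) Filter.atTop Filter.atTop :=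
    Real.tendsto_sqrt_atTop.comp
      ((Real.tendsto_logb_atTop one_lt_two).comp tendsto_natCast_atTop_atTop)
  refine le_of_forall_pos_sub_le fun ε hε => ?_
  refine Filter.le_liminf_of_le hcob ?_
  filter_upwards [Filter.eventually_ge_atTop 2, hlim.eventually_ge_atTop (5 / (2 * ε)),
    hlim.eventually_gt_atTop 0] with n hn h1 h2
  rw [le_div_iff₀ (by positivity)]
  have h3 := TS_log_lower hn
  rw [div_le_iff₀ (by positivity)] at h1
  linarith
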